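/- Suppose δ_j < 1/2. Then the perturbed reduced resolvent R̂_j = Σ_{k≠j} (λ̂_k − λ_j)^{-1} P̂_k satisfies, for every integer k ≥ 1, ‖|R_j|^{-1/2} R̂_j^k‖_∞ ≤ (1 − δ_j)^{−k} g_j^{−k+1/2}. -/

import Mathlib

open Matrix Finset

noncomputable def opNorm {d : ℕ} (A : Matrix (Fin d) (Fin d) ℝ) : ℝ :=
  ‖Matrix.toEuclideanCLM (𝕜 := ℝ) A‖

noncomputable def hsNorm {d : ℕ} (A : Matrix (Fin d) (Fin d) ℝ) : ℝ :=
  Real.sqrt (Matrix.trace (Aᵀ * A))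

noncomputable def proj {d : ℕ} (u : Fin d → ℝ) : Matrix (Fin d) (Fin d) ℝ :=
  Matrix.vecMulVec u u

/-- `|R_j|^{1/2}` : square root of the absolute value of the reduced resolvent. -/
noncomputable def sqrtAbsRes {d : ℕ} (lam : Fin d → ℝ) (u : Fin d → Fin d → ℝ)
    (j : Fin d) : Matrix (Fin d) (Fin d) ℝ :=
  ∑ k ∈ Finset.univ.filter (fun k => k ≠ j), (Real.sqrt |lam k - lam j|)⁻¹ • proj (u k)

/-- `|R_j|^{-1/2}`. -/
noncomputable def invSqrtAbsRes {d : ℕ} (lam : Fin d → ℝ) (u : Fin d → Fin d → ℝ)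
    (j : Fin d) : Matrix (Fin d) (Fin d) ℝ :=
  ∑ k ∈ Finset.univ.filter (fun k => k ≠ j), Real.sqrt |lam k - lam j| • proj (u k)

/-- the reduced resolvent `R_j`. -/
noncomputable def res {d : ℕ} (lam : Fin d → ℝ) (u : Fin d → Fin d → ℝ)
    (j : Fin d) : Matrix (Fin d) (Fin d) ℝ :=
  ∑ k ∈ Finset.univ.filter (fun k => k ≠ j), (lam k - lam j)⁻¹ • proj (u k)

/-- `δ_j`. -/
noncomputable def delta {d : ℕ} (lam : Fin d → ℝ) (u : Fin d → Fin d → ℝ) (j : Fin d)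
    (gj : ℝ) (E : Matrix (Fin d) (Fin d) ℝ) : ℝ :=
  opNorm ((sqrtAbsRes lam u j + (Real.sqrt gj)⁻¹ • proj (u j)) * E *
    (sqrtAbsRes lam u j + (Real.sqrt gj)⁻¹ • proj (u j)))

/-- `δ'_j`. -/
noncomputable def delta' {d : ℕ} (lam : Fin d → ℝ) (u : Fin d → Fin d → ℝ) (j : Fin d)
    (gj : ℝ) (E : Matrix (Fin d) (Fin d) ℝ) : ℝ :=
  max (opNorm (sqrtAbsRes lam u j * E * sqrtAbsRes lam u j))
    (max ((Real.sqrt gj)⁻¹ * hsNorm (sqrtAbsRes lam u j * E * proj (u j)))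
      (gj⁻¹ * hsNorm (proj (u j) * E * proj (u j))))

/-!
Write `A = Σ - λ_j`, `Â = A + E`, `M = |R_j|^{-1/2}` and `κ = 1 - δ_j`. Testing `Âv` against
`sign(A)v` turns `A` into `|A| = M²`, and `E` is bounded by `δ_j` relative to the form of
`|A| + g_j P_j`. Since `δ_j ≤ 1/2`, the part of that form along `u_j` is absorbed by
`‖v‖² - ‖sign(A)v‖²`, so that `2 κ² g_j ‖Mv‖² ≤ κ² g_j² ‖v‖² + ‖Âv‖²` for every `v`. On `v = R̂_j z`
both terms on the right are at most `‖z‖²`: the first by the eigenvalue separation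
`‖R̂_j‖ ≤ (κ g_j)⁻¹` (a dimension-count min-max argument), the second because `Â R̂_j` is an
orthogonal projection. This bounds `M R̂_j`, and each further factor `R̂_j` costs `(κ g_j)⁻¹`.
-/

theorem norm_mul_pow_succ_le {R : Type*} [SeminormedRing R] (a b : R) (n : ℕ) :
    ‖a * b ^ (n + 1)‖ ≤ ‖a * b‖ * ‖b‖ ^ n := by
  induction n with
  | zero => simp
  | succ n ih =>
    rw [pow_succ b, pow_succ ‖b‖, ← mul_assoc, ← mul_assoc]
    exact (norm_mul_le _ _).trans (mul_le_mul_of_nonneg_right ih (norm_nonneg b))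

section SpectralOperator

open InnerProductSpace

variable {𝕜 E ι : Type*} [RCLike 𝕜] [NormedAddCommGroup E] [InnerProductSpace 𝕜 E] [Fintype ι]
  {b : OrthonormalBasis ι 𝕜 E} {f h w : ι → ℝ} {T : E →L[𝕜] E}

/-- The operator `∑ i, f i • P i` with real eigenvalues `f i` and eigenprojections `P i` onto the
lines spanned by the orthonormal basis vectors `b i`. -/
noncomputable def spectralOp (b : OrthonormalBasis ι 𝕜 E) (f : ι → ℝ) : E →L[𝕜] E :=
  ∑ i, (f i : 𝕜) • rankOne 𝕜 (b i) (b i)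

theorem inner_spectralOp (b : OrthonormalBasis ι 𝕜 E) (f : ι → ℝ) (x : E) (i : ι) :
    inner 𝕜 (b i) (spectralOp b f x) = f i * inner 𝕜 (b i) x := by
  simpa [spectralOp, smul_smul] using
    b.orthonormal.inner_right_fintype (fun i => (f i : 𝕜) * inner 𝕜 (b i) x) i

theorem spectralOp_mul (b : OrthonormalBasis ι 𝕜 E) (f h : ι → ℝ) :
    spectralOp b f * spectralOp b h = spectralOp b (f * h) := by
  ext x
  refine ext_inner_left_basis b.toBasis fun i => ?_
  simp [inner_spectralOp, mul_assoc]

theorem spectralOp_one (b : OrthonormalBasis ι 𝕜 E) : spectralOp b 1 = 1 := by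
  ext x
  exact ext_inner_left_basis b.toBasis fun i => by simp [inner_spectralOp]

theorem spectralOp_neg (b : OrthonormalBasis ι 𝕜 E) (f : ι → ℝ) :
    spectralOp b (-f) = -spectralOp b f := by
  simp [spectralOp]

theorem spectralOp_sub_const (b : OrthonormalBasis ι 𝕜 E) (f : ι → ℝ) (c : ℝ) :
    spectralOp b (fun i => f i - c) = spectralOp b f - (c : 𝕜) • 1 := by
  ext x
  exact ext_inner_left_basis b.toBasis fun i => by
    simp [inner_spectralOp, inner_sub_right, inner_smul_right, sub_mul]

theorem spectralOp_sub_const_add {bh : OrthonormalBasis ι 𝕜 E}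
    (hT : spectralOp b f + T = spectralOp bh h) (c : ℝ) :
    spectralOp b (fun i => f i - c) + T = spectralOp bh (fun i => h i - c) := by
  rw [spectralOp_sub_const, spectralOp_sub_const, ← hT, sub_add_eq_add_sub]

theorem inner_spectralOp_left (b : OrthonormalBasis ι 𝕜 E) (f : ι → ℝ) (x y : E) :
    inner 𝕜 (spectralOp b f x) y = inner 𝕜 x (spectralOp b f y) := by
  simp [spectralOp, sum_inner, inner_sum, inner_smul_left, inner_smul_right, mul_comm]

theorem re_inner_spectralOp (b : OrthonormalBasis ι 𝕜 E) (f : ι → ℝ) (x : E) :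
    RCLike.re (inner 𝕜 x (spectralOp b f x)) = ∑ i, f i * ‖inner 𝕜 (b i) x‖ ^ 2 := by
  rw [← b.sum_inner_mul_inner, map_sum]
  refine Finset.sum_congr rfl fun i _ => ?_
  rw [inner_spectralOp, mul_left_comm, ← inner_conj_symm x, RCLike.conj_mul, ← RCLike.ofReal_pow,
    ← RCLike.ofReal_mul, RCLike.ofReal_re]

theorem norm_spectralOp_apply_sq (b : OrthonormalBasis ι 𝕜 E) (f : ι → ℝ) (x : E) :
    ‖spectralOp b f x‖ ^ 2 = ∑ i, f i ^ 2 * ‖inner 𝕜 (b i) x‖ ^ 2 := by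
  simp [← b.sum_sq_norm_inner_right, inner_spectralOp, mul_pow]

theorem norm_spectralOp_sqrt_apply_sq (hw : ∀ i, 0 ≤ w i) (x : E) :
    ‖spectralOp b (fun i => √(w i)) x‖ ^ 2 = ∑ i, w i * ‖inner 𝕜 (b i) x‖ ^ 2 := by
  simp only [norm_spectralOp_apply_sq, Real.sq_sqrt (hw _)]

theorem norm_spectralOp_le {C : ℝ} (hC : 0 ≤ C) (hf : ∀ i, |f i| ≤ C) : ‖spectralOp b f‖ ≤ C := by
  refine ContinuousLinearMap.opNorm_le_bound _ hC fun x => le_of_sq_le_sq ?_ (by positivity)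
  rw [mul_pow, norm_spectralOp_apply_sq, ← b.sum_sq_norm_inner_right x, Finset.mul_sum]
  gcongr ∑ i, ?_ * _ with i
  exact sq_le_sq' (abs_le.mp (hf i)).1 (abs_le.mp (hf i)).2

/-- The norm of `T` relative to positive weights `w`: the operator norm of `W^{-1/2} T W^{-1/2}` for
`W = spectralOp b w`. With `w = gapWeight lam j g` this is `δ_j`. -/
noncomputable def relNorm (b : OrthonormalBasis ι 𝕜 E) (w : ι → ℝ) (T : E →L[𝕜] E) : ℝ :=
  ‖spectralOp b (fun i => (√(w i))⁻¹) * T * spectralOp b (fun i => (√(w i))⁻¹)‖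

theorem relNorm_neg (b : OrthonormalBasis ι 𝕜 E) (w : ι → ℝ) (T : E →L[𝕜] E) :
    relNorm b w (-T) = relNorm b w T := by
  simp [relNorm]

theorem norm_inner_le_relNorm (hw : ∀ i, 0 < w i) (x y : E) :
    ‖inner 𝕜 x (T y)‖ ≤ relNorm b w T *
      (‖spectralOp b (fun i => √(w i)) x‖ * ‖spectralOp b (fun i => √(w i)) y‖) := by
  set D := spectralOp b fun i => (√(w i))⁻¹ with hD
  set W := spectralOp b fun i => √(w i)
  have hDW (z : E) : D (W z) = z := by
    have hone : (fun i => (√(w i))⁻¹) * (fun i => √(w i)) = 1 :=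
      funext fun i => inv_mul_cancel₀ (Real.sqrt_pos.mpr (hw i)).ne'
    rw [← mul_apply_eq_comp, spectralOp_mul, hone, spectralOp_one,
      one_apply_eq_self]
  calc ‖inner 𝕜 x (T y)‖ = ‖inner 𝕜 (W x) ((D * T * D) (W y))‖ := by
        simp only [mul_apply_eq_comp, hDW]
        rw [hD, ← inner_spectralOp_left, ← hD, hDW]
    _ ≤ ‖W x‖ * ‖(D * T * D) (W y)‖ := norm_inner_le_norm _ _
    _ ≤ ‖W x‖ * (‖D * T * D‖ * ‖W y‖) := by gcongr; exact ContinuousLinearMap.le_opNorm _ _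
    _ = relNorm b w T * (‖W x‖ * ‖W y‖) := mul_left_comm _ _ _

theorem one_sub_relNorm_mul_le {bh : OrthonormalBasis ι 𝕜 E} {s sh : ι → ℝ} {g a : ℝ} {v : E}
    (hT : spectralOp b s + T = spectralOp bh sh) (hg : 0 < g) (hgw : ∀ i, g ≤ w i)
    (hδ : relNorm b w T ≤ 1) (hv : v ≠ 0) (hs : ∀ i, inner 𝕜 (b i) v ≠ 0 → w i ≤ s i)
    (hsh : ∀ i, inner 𝕜 (bh i) v ≠ 0 → sh i ≤ a) :
    (1 - relNorm b w T) * g ≤ a := by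
  have hw (i : ι) : 0 < w i := hg.trans_le (hgw i)
  set N := ‖spectralOp b (fun i => √(w i)) v‖ ^ 2 with hN
  have hN_eq : N = ∑ i, w i * ‖inner 𝕜 (b i) v‖ ^ 2 :=
    norm_spectralOp_sqrt_apply_sq (fun i => (hw i).le) v
  have h_gap : g * ‖v‖ ^ 2 ≤ N := by
    rw [hN_eq, ← b.sum_sq_norm_inner_right, Finset.mul_sum]
    gcongr with i
    exact hgw i
  have h_unperturbed : N ≤ RCLike.re (inner 𝕜 v (spectralOp b s v)) := by
    rw [hN_eq, re_inner_spectralOp]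
    refine Finset.sum_le_sum fun i _ => ?_
    rcases eq_or_ne (inner 𝕜 (b i) v) 0 with h0 | h0
    · simp [h0]
    · exact mul_le_mul_of_nonneg_right (hs i h0) (sq_nonneg _)
  have h_perturbation : -(relNorm b w T * N) ≤ RCLike.re (inner 𝕜 v (T v)) := by
    rw [hN, sq]
    exact (abs_le.mp ((RCLike.abs_re_le_norm _).trans (norm_inner_le_relNorm hw v v))).1
  have h_perturbed : RCLike.re (inner 𝕜 v (spectralOp bh sh v)) ≤ a * ‖v‖ ^ 2 := by
    rw [re_inner_spectralOp, ← bh.sum_sq_norm_inner_right, Finset.mul_sum]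
    refine Finset.sum_le_sum fun i _ => ?_
    rcases eq_or_ne (inner 𝕜 (bh i) v) 0 with h0 | h0
    · simp [h0]
    · exact mul_le_mul_of_nonneg_right (hsh i h0) (sq_nonneg _)
  rw [← hT, _root_.add_apply, inner_add_right, map_add] at h_perturbed
  refine le_of_mul_le_mul_right ?_ (by positivity : 0 < ‖v‖ ^ 2)
  calc (1 - relNorm b w T) * g * ‖v‖ ^ 2 = (1 - relNorm b w T) * (g * ‖v‖ ^ 2) := mul_assoc _ _ _
    _ ≤ (1 - relNorm b w T) * N := mul_le_mul_of_nonneg_left h_gap (sub_nonneg.mpr hδ)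
    _ ≤ a * ‖v‖ ^ 2 := by linarith

theorem exists_ne_zero_forall_inner_eq_zero {κ : Type*} [Fintype κ] [FiniteDimensional 𝕜 E]
    (a : κ → E) (ha : Fintype.card κ < Module.finrank 𝕜 E) :
    ∃ v ≠ 0, ∀ i, inner 𝕜 (a i) v = 0 := by
  have hker : LinearMap.ker (LinearMap.pi fun i => innerₛₗ 𝕜 (a i)) ≠ ⊥ :=
    LinearMap.ker_ne_bot_of_finrank_lt (by simpa using ha)
  obtain ⟨v, hv, hv0⟩ := Submodule.exists_mem_ne_zero_of_ne_bot hker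
  exact ⟨v, hv0, fun i => congrFun (LinearMap.mem_ker.mp hv) i⟩

theorem exists_ne_zero_inner_eq_zero_of_lt [LinearOrder ι] (b bh : OrthonormalBasis ι 𝕜 E) (k : ι) :
    ∃ v ≠ 0, (∀ i, k < i → inner 𝕜 (b i) v = 0) ∧ ∀ i, i < k → inner 𝕜 (bh i) v = 0 := by
  have : FiniteDimensional 𝕜 E := b.toBasis.finiteDimensional_of_finite
  obtain ⟨v, hv0, hv⟩ := exists_ne_zero_forall_inner_eq_zero (𝕜 := 𝕜)
    (fun i : {i // i ≠ k} => if k < i then b i else bh i) (by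
      rw [Module.finrank_eq_card_basis b.toBasis]
      exact Fintype.card_subtype_lt (x := k) (by simp))
  refine ⟨v, hv0, fun i hi => ?_, fun i hi => ?_⟩
  · simpa [hi] using hv ⟨i, hi.ne'⟩
  · simpa [hi.not_gt] using hv ⟨i, hi.ne⟩

end SpectralOperator

section ReducedResolvent

/-- The weights `|lam i - lam j|` of `|R_j|⁻¹`, completed by the gap `g` at `j` to positive
weights. -/
def gapWeight {ι : Type*} [DecidableEq ι] (lam : ι → ℝ) (j : ι) (g : ℝ) : ι → ℝ :=
  Function.update (fun i => |lam i - lam j|) j g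

theorem gapWeight_self {ι : Type*} [DecidableEq ι] (lam : ι → ℝ) (j : ι) (g : ℝ) :
    gapWeight lam j g j = g :=
  Function.update_self ..

theorem gapWeight_of_ne {ι : Type*} [DecidableEq ι] (lam : ι → ℝ) {i j : ι} (g : ℝ) (hij : i ≠ j) :
    gapWeight lam j g i = |lam i - lam j| :=
  Function.update_of_ne hij ..

theorem le_gapWeight {ι : Type*} [DecidableEq ι] {lam : ι → ℝ} {j : ι} {g : ℝ}
    (hgap : ∀ i ≠ j, g ≤ |lam i - lam j|) (i : ι) : g ≤ gapWeight lam j g i := by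
  rcases eq_or_ne i j with rfl | hij
  · exact (gapWeight_self lam i g).ge
  · exact (hgap i hij).trans_eq (gapWeight_of_ne lam g hij).symm

variable {𝕜 E ι : Type*} [RCLike 𝕜] [NormedAddCommGroup E] [InnerProductSpace 𝕜 E] [Fintype ι]
  {b bh : OrthonormalBasis ι 𝕜 E} {T : E →L[𝕜] E} {lam lamh : ι → ℝ} {j : ι} {g : ℝ}

/-- The reduced resolvent `∑_{i ≠ j} (f i - z)⁻¹ P i` at `z` of the operator `spectralOp b f`, which
omits the `j`-th eigenprojection; the omission is encoded by the coefficient `0` at `j`. -/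
noncomputable def reducedResolvent [DecidableEq ι] (b : OrthonormalBasis ι 𝕜 E) (f : ι → ℝ) (j : ι)
    (z : ℝ) : E →L[𝕜] E :=
  spectralOp b (Function.update (fun i => (f i - z)⁻¹) j 0)

theorem norm_spectralOp_sqrt_gapWeight_sq [DecidableEq ι] (b : OrthonormalBasis ι 𝕜 E)
    (hw : ∀ i, 0 ≤ gapWeight lam j g i) (v : E) :
    ‖spectralOp b (fun i => √(gapWeight lam j g i)) v‖ ^ 2 =
      ‖spectralOp b (fun i => √|lam i - lam j|) v‖ ^ 2 + g * ‖inner 𝕜 (b j) v‖ ^ 2 := by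
  rw [norm_spectralOp_sqrt_apply_sq hw,
    norm_spectralOp_sqrt_apply_sq fun i => abs_nonneg _,
    ← Finset.add_sum_erase _ _ (Finset.mem_univ j), ← Finset.add_sum_erase _ _ (Finset.mem_univ j),
    gapWeight_self, sub_self, abs_zero, zero_mul, zero_add, add_comm]
  congr 1
  exact Finset.sum_congr rfl fun i hi => by rw [gapWeight_of_ne lam g (Finset.ne_of_mem_erase hi)]

theorem norm_spectralOp_sqrt_gapWeight_sign [DecidableEq ι] (b : OrthonormalBasis ι 𝕜 E)
    (hw : ∀ i, 0 ≤ gapWeight lam j g i) (v : E) :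
    ‖spectralOp b (fun i => √(gapWeight lam j g i))
        (spectralOp b (fun i => SignType.sign (lam i - lam j)) v)‖ =
      ‖spectralOp b (fun i => √|lam i - lam j|) v‖ := by
  rw [← sq_eq_sq₀ (norm_nonneg _) (norm_nonneg _), norm_spectralOp_sqrt_apply_sq hw,
    norm_spectralOp_sqrt_apply_sq fun i => abs_nonneg _]
  refine Finset.sum_congr rfl fun i _ => ?_
  rw [inner_spectralOp, norm_mul, mul_pow, ← mul_assoc, RCLike.norm_ofReal, sq_abs]
  congr 1
  rcases eq_or_ne (lam i - lam j) 0 with h0 | h0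
  · simp [h0]
  · rw [gapWeight_of_ne lam g (by rintro rfl; simp at h0)]
    rcases h0.lt_or_gt with h | h <;> simp [h]

theorem one_sub_relNorm_mul_le_abs_sub [LinearOrder ι] (hlam : Antitone lam) (hlamh : Antitone lamh)
    (hT : spectralOp b lam + T = spectralOp bh lamh) (hg : 0 < g)
    (hgap : ∀ i, g ≤ gapWeight lam j g i) (hδ : relNorm b (gapWeight lam j g) T ≤ 1) {k : ι}
    (hk : k ≠ j) :
    (1 - relNorm b (gapWeight lam j g) T) * g ≤ |lamh k - lam j| := by
  have hshift := spectralOp_sub_const_add hT (lam j)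
  rcases hk.lt_or_gt with hkj | hjk
  · obtain ⟨v, hv0, hv, hvh⟩ := exists_ne_zero_inner_eq_zero_of_lt b bh k
    refine (one_sub_relNorm_mul_le hshift hg hgap hδ hv0 (fun i hi => ?_) fun i hi => ?_).trans
      (le_abs_self _)
    · have hij : i < j := (not_lt.mp (mt (hv i) hi)).trans_lt hkj
      rw [gapWeight_of_ne lam g hij.ne, abs_of_nonneg (sub_nonneg.mpr (hlam hij.le))]
    · exact sub_le_sub_right (hlamh (not_lt.mp (mt (hvh i) hi))) _
  · obtain ⟨v, hv0, hvh, hv⟩ := exists_ne_zero_inner_eq_zero_of_lt bh b k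
    have hshift_neg : spectralOp b (-fun i => lam i - lam j) + -T
        = spectralOp bh (-fun i => lamh i - lam j) := by
      rw [spectralOp_neg, spectralOp_neg, ← hshift, neg_add]
    rw [← relNorm_neg] at hδ ⊢
    refine (one_sub_relNorm_mul_le hshift_neg hg hgap hδ hv0 (fun i hi => ?_) fun i hi => ?_).trans
      (neg_le_abs _)
    · have hij : j < i := hjk.trans_le (not_lt.mp (mt (hv i) hi))
      rw [gapWeight_of_ne lam g hij.ne', abs_of_nonpos (sub_nonpos.mpr (hlam hij.le)), Pi.neg_apply]
    · exact neg_le_neg (sub_le_sub_right (hlamh (not_lt.mp (mt (hvh i) hi))) _)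

theorem le_re_inner_spectralOp_sign [DecidableEq ι] (b : OrthonormalBasis ι 𝕜 E)
    (hw : ∀ i, 0 < gapWeight lam j g i) (T : E →L[𝕜] E) (v : E) :
    (1 - relNorm b (gapWeight lam j g) T) * ‖spectralOp b (fun i => √|lam i - lam j|) v‖ ^ 2
        - relNorm b (gapWeight lam j g) T * (g * ‖inner 𝕜 (b j) v‖ ^ 2) / 2 ≤
      RCLike.re (inner 𝕜 (spectralOp b (fun i => SignType.sign (lam i - lam j)) v)
        ((spectralOp b (fun i => lam i - lam j) + T) v)) := by
  set δ := relNorm b (gapWeight lam j g) T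
  set M := spectralOp b fun i => √|lam i - lam j| with hM
  set W := spectralOp b fun i => √(gapWeight lam j g i)
  set y := spectralOp b (fun i => SignType.sign (lam i - lam j)) v with hy
  have h_unperturbed :
      RCLike.re (inner 𝕜 y (spectralOp b (fun i => lam i - lam j) v)) = ‖M v‖ ^ 2 := by
    have hmul : (fun i => (SignType.sign (lam i - lam j) : ℝ)) * (fun i => lam i - lam j) =
        fun i => |lam i - lam j| := funext fun i => sign_mul_self _
    rw [hy, inner_spectralOp_left, ← mul_apply_eq_comp, spectralOp_mul, hmul,
      re_inner_spectralOp, hM, norm_spectralOp_sqrt_apply_sq fun i => abs_nonneg _]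
  have h_perturbation : -(δ * (‖M v‖ * ‖W v‖)) ≤ RCLike.re (inner 𝕜 y (T v)) := by
    rw [← norm_spectralOp_sqrt_gapWeight_sign b fun i => (hw i).le]
    exact (abs_le.mp ((RCLike.abs_re_le_norm _).trans (norm_inner_le_relNorm hw y v))).1
  have h_young : δ * (2 * ‖M v‖ * ‖W v‖) ≤ δ * (‖M v‖ ^ 2 + ‖W v‖ ^ 2) :=
    mul_le_mul_of_nonneg_left (two_mul_le_add_sq _ _) (norm_nonneg _)
  rw [norm_spectralOp_sqrt_gapWeight_sq b fun i => (hw i).le] at h_young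
  rw [_root_.add_apply, inner_add_right, map_add, h_unperturbed]
  linarith

theorem norm_spectralOp_sign_sq_add_le (b : OrthonormalBasis ι 𝕜 E) (v : E) :
    ‖spectralOp b (fun i => SignType.sign (lam i - lam j)) v‖ ^ 2 + ‖inner 𝕜 (b j) v‖ ^ 2
      ≤ ‖v‖ ^ 2 := by
  classical
  rw [norm_spectralOp_apply_sq, ← b.sum_sq_norm_inner_right v,
    ← Finset.add_sum_erase _ _ (Finset.mem_univ j), ← Finset.add_sum_erase _ _ (Finset.mem_univ j),
    sub_self, sign_zero, SignType.coe_zero, zero_pow two_ne_zero, zero_mul, zero_add, add_comm]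
  gcongr with i _
  refine mul_le_of_le_one_left (sq_nonneg _) ?_
  rcases lt_trichotomy (lam i - lam j) 0 with h | h | h <;> simp [h]

theorem two_mul_norm_sqrt_abs_sq_le_norm_sq_add [DecidableEq ι] (b : OrthonormalBasis ι 𝕜 E)
    (hw : ∀ i, 0 < gapWeight lam j g i) (hδ : relNorm b (gapWeight lam j g) T ≤ 1 / 2) (v : E) :
    2 * ((1 - relNorm b (gapWeight lam j g) T) ^ 2 * g
        * ‖spectralOp b (fun i => √|lam i - lam j|) v‖ ^ 2) ≤
      ((1 - relNorm b (gapWeight lam j g) T) * g * ‖v‖) ^ 2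
        + ‖(spectralOp b (fun i => lam i - lam j) + T) v‖ ^ 2 := by
  set κ := 1 - relNorm b (gapWeight lam j g) T with hκ
  set x := (spectralOp b (fun i => lam i - lam j) + T) v
  set y := spectralOp b (fun i => SignType.sign (lam i - lam j)) v
  have hg : 0 < g := (hw j).trans_eq (gapWeight_self lam j g)
  have hκ0 : 0 < κ := by linarith
  have h_lower := mul_le_mul_of_nonneg_left (le_re_inner_spectralOp_sign b hw T v)
    (mul_pos hκ0 hg).le
  have h_upper : 2 * (κ * g * RCLike.re (inner 𝕜 y x)) ≤ (κ * g * ‖y‖) ^ 2 + ‖x‖ ^ 2 := by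
    have h_cs : κ * g * RCLike.re (inner 𝕜 y x) ≤ κ * g * (‖y‖ * ‖x‖) := by
      gcongr
      exact re_inner_le_norm y x
    linarith [two_mul_le_add_sq (κ * g * ‖y‖) ‖x‖]
  have h_norm := mul_le_mul_of_nonneg_left
    (norm_spectralOp_sign_sq_add_le (lam := lam) (j := j) b v) (sq_nonneg (κ * g))
  have h_coord : 0 ≤ κ * (κ - relNorm b (gapWeight lam j g) T) * (g * ‖inner 𝕜 (b j) v‖) ^ 2 :=
    mul_nonneg (mul_nonneg hκ0.le (by linarith)) (sq_nonneg _)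
  rw [← hκ] at h_lower
  linarith

theorem norm_reducedResolvent_le [DecidableEq ι] (b : OrthonormalBasis ι 𝕜 E) {f : ι → ℝ} {z c : ℝ}
    (hc : 0 < c) (hf : ∀ i ≠ j, c ≤ |f i - z|) : ‖reducedResolvent b f j z‖ ≤ c⁻¹ := by
  refine norm_spectralOp_le (inv_nonneg.mpr hc.le) fun i => ?_
  rcases eq_or_ne i j with rfl | hij
  · simpa using hc.le
  · rw [Function.update_of_ne hij, abs_inv]
    exact inv_anti₀ hc (hf i hij)

theorem norm_spectralOp_sub_mul_reducedResolvent_le_one [DecidableEq ι]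
    (b : OrthonormalBasis ι 𝕜 E) (f : ι → ℝ) (j : ι) (z : ℝ) :
    ‖spectralOp b (fun i => f i - z) * reducedResolvent b f j z‖ ≤ 1 := by
  rw [reducedResolvent, spectralOp_mul]
  refine norm_spectralOp_le zero_le_one fun i => ?_
  rcases eq_or_ne i j with rfl | hij
  · simp
  · rw [Pi.mul_apply, Function.update_of_ne hij, abs_mul, abs_inv]
    exact mul_inv_le_one

theorem norm_sqrt_abs_mul_reducedResolvent_le [LinearOrder ι] (hlam : Antitone lam)
    (hlamh : Antitone lamh) (hT : spectralOp b lam + T = spectralOp bh lamh) (hg : 0 < g)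
    (hgap : ∀ i, g ≤ gapWeight lam j g i) (hδ : relNorm b (gapWeight lam j g) T ≤ 1 / 2) :
    ‖spectralOp b (fun i => √|lam i - lam j|) * reducedResolvent bh lamh j (lam j)‖ ≤
      ((1 - relNorm b (gapWeight lam j g) T) * g)⁻¹ * √g := by
  set κ := 1 - relNorm b (gapWeight lam j g) T with hκ
  set R := reducedResolvent bh lamh j (lam j)
  have hκ0 : 0 < κ := by linarith
  have hκg : 0 < κ * g := mul_pos hκ0 hg
  refine ContinuousLinearMap.opNorm_le_bound _ (by positivity) fun z => ?_
  have h_resolvent : κ * g * ‖R z‖ ≤ ‖z‖ := by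
    rw [← le_inv_mul_iff₀ hκg]
    exact R.le_of_opNorm_le (norm_reducedResolvent_le bh hκg fun i hi =>
      one_sub_relNorm_mul_le_abs_sub hlam hlamh hT hg hgap (by linarith) hi) z
  have h_contraction : ‖(spectralOp b (fun i => lam i - lam j) + T) (R z)‖ ≤ ‖z‖ := by
    rw [spectralOp_sub_const_add hT, ← mul_apply_eq_comp, ← one_mul ‖z‖]
    exact ContinuousLinearMap.le_of_opNorm_le _
      (norm_spectralOp_sub_mul_reducedResolvent_le_one bh lamh j (lam j)) z
  have h_form := two_mul_norm_sqrt_abs_sq_le_norm_sq_add b (fun i => hg.trans_le (hgap i)) hδ (R z)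
  rw [← hκ] at h_form
  refine le_of_sq_le_sq ?_ (by positivity)
  calc ‖spectralOp b (fun i => √|lam i - lam j|) (R z)‖ ^ 2 ≤ ‖z‖ ^ 2 / (κ ^ 2 * g) := by
        rw [le_div_iff₀' (by positivity)]
        linarith [pow_le_pow_left₀ (by positivity) h_resolvent 2,
          pow_le_pow_left₀ (norm_nonneg _) h_contraction 2]
    _ = ((κ * g)⁻¹ * √g * ‖z‖) ^ 2 := by
        rw [mul_pow, mul_pow, Real.sq_sqrt hg.le]
        field_simp

end ReducedResolvent

section EuclideanMatrix

open InnerProductSpace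

variable {d : ℕ} {u : Fin d → Fin d → ℝ} {b : OrthonormalBasis (Fin d) ℝ (EuclideanSpace ℝ (Fin d))}

theorem exists_orthonormalBasis_eq_toLp (hu : ∀ k l, u k ⬝ᵥ u l = if k = l then (1 : ℝ) else 0) :
    ∃ b : OrthonormalBasis (Fin d) ℝ (EuclideanSpace ℝ (Fin d)),
      ∀ k, b k = WithLp.toLp 2 (u k) := by
  have hortho : Orthonormal ℝ fun k => WithLp.toLp 2 (u k) := by
    refine orthonormal_iff_ite.mpr fun k l => ?_
    rw [EuclideanSpace.inner_toLp_toLp, star_trivial, dotProduct_comm, hu k l]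
  obtain ⟨b, hb⟩ := Orthonormal.exists_orthonormalBasis_extension_of_card_eq (s := Set.univ)
    (v := fun k => WithLp.toLp 2 (u k)) (by simp) (hortho.comp _ Subtype.val_injective)
  exact ⟨b, fun k => hb k trivial⟩

theorem toEuclideanCLM_proj (u : Fin d → ℝ) :
    toEuclideanCLM (𝕜 := ℝ) (proj u) = rankOne ℝ (WithLp.toLp 2 u) (WithLp.toLp 2 u) := by
  ext x i
  simp [proj, vecMulVec_mulVec, EuclideanSpace.inner_eq_star_dotProduct, dotProduct_comm, mul_comm]

theorem toEuclideanCLM_sum_smul_proj (hb : ∀ k, b k = WithLp.toLp 2 (u k)) (f : Fin d → ℝ) :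
    toEuclideanCLM (𝕜 := ℝ) (∑ k, f k • proj (u k)) = spectralOp b f := by
  simp [spectralOp, toEuclideanCLM_proj, hb]

theorem sum_filter_ne_smul_proj (u : Fin d → Fin d → ℝ) (f : Fin d → ℝ) (j : Fin d) :
    ∑ k ∈ univ.filter (fun k => k ≠ j), f k • proj (u k) =
      ∑ k, Function.update f j 0 k • proj (u k) := by
  rw [Finset.sum_filter]
  refine Finset.sum_congr rfl fun k _ => ?_
  rcases eq_or_ne k j with rfl | hk <;> simp [*]

theorem toEuclideanCLM_invSqrtAbsRes (hb : ∀ k, b k = WithLp.toLp 2 (u k)) (lam : Fin d → ℝ)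
    (j : Fin d) :
    toEuclideanCLM (𝕜 := ℝ) (invSqrtAbsRes lam u j) = spectralOp b fun k => √|lam k - lam j| := by
  rw [invSqrtAbsRes, sum_filter_ne_smul_proj, Function.update_eq_self_iff.mpr (by simp),
    toEuclideanCLM_sum_smul_proj hb]

theorem toEuclideanCLM_sum_inv_smul_proj (hb : ∀ k, b k = WithLp.toLp 2 (u k)) (f : Fin d → ℝ)
    (j : Fin d) (z : ℝ) :
    toEuclideanCLM (𝕜 := ℝ) (∑ k ∈ univ.filter (fun k => k ≠ j), (f k - z)⁻¹ • proj (u k)) =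
      reducedResolvent b f j z := by
  rw [sum_filter_ne_smul_proj, toEuclideanCLM_sum_smul_proj hb, reducedResolvent]

theorem sqrtAbsRes_add_smul_proj (lam : Fin d → ℝ) (u : Fin d → Fin d → ℝ) (j : Fin d) (g : ℝ) :
    sqrtAbsRes lam u j + (√g)⁻¹ • proj (u j) = ∑ k, (√(gapWeight lam j g k))⁻¹ • proj (u k) := by
  rw [sqrtAbsRes, ← Finset.add_sum_erase _ _ (Finset.mem_univ j), gapWeight_self, add_comm,
    Finset.filter_ne']
  congr 1
  exact Finset.sum_congr rfl fun k hk => by rw [gapWeight_of_ne lam g (Finset.ne_of_mem_erase hk)]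

theorem delta_eq_relNorm (hb : ∀ k, b k = WithLp.toLp 2 (u k)) (lam : Fin d → ℝ) (j : Fin d)
    (g : ℝ) (E : Matrix (Fin d) (Fin d) ℝ) :
    delta lam u j g E = relNorm b (gapWeight lam j g) (toEuclideanCLM (𝕜 := ℝ) E) := by
  rw [delta, opNorm, sqrtAbsRes_add_smul_proj, map_mul, map_mul, toEuclideanCLM_sum_smul_proj hb,
    relNorm]

end EuclideanMatrix

theorem stmt16_general {𝕜 E ι : Type*} [RCLike 𝕜] [NormedAddCommGroup E] [InnerProductSpace 𝕜 E]
    [Fintype ι] [LinearOrder ι] {b bh : OrthonormalBasis ι 𝕜 E} {lam lamh : ι → ℝ}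
    (hlam : Antitone lam) (hlamh : Antitone lamh) {T : E →L[𝕜] E}
    (hT : spectralOp b lam + T = spectralOp bh lamh) {j : ι} {g : ℝ} (hg : 0 < g)
    (hgap : ∀ i ≠ j, g ≤ |lam i - lam j|) (hδ : relNorm b (gapWeight lam j g) T ≤ 1 / 2)
    {k : ℕ} (hk : 1 ≤ k) :
    ‖spectralOp b (fun i => √|lam i - lam j|) * reducedResolvent bh lamh j (lam j) ^ k‖ ≤
      (1 - relNorm b (gapWeight lam j g) T) ^ (-(k : ℤ)) * g ^ (-(k : ℤ)) * √g := by
  obtain ⟨n, rfl⟩ := Nat.exists_eq_add_of_le' hk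
  have hgapWeight := le_gapWeight hgap
  have hκg : 0 < (1 - relNorm b (gapWeight lam j g) T) * g := mul_pos (by linarith) hg
  have h_resolvent := norm_reducedResolvent_le bh hκg fun i hi =>
    one_sub_relNorm_mul_le_abs_sub hlam hlamh hT hg hgapWeight (by linarith) hi
  set κ := 1 - relNorm b (gapWeight lam j g) T
  set R := reducedResolvent bh lamh j (lam j)
  calc ‖spectralOp b (fun i => √|lam i - lam j|) * R ^ (n + 1)‖
      ≤ ‖spectralOp b (fun i => √|lam i - lam j|) * R‖ * ‖R‖ ^ n := norm_mul_pow_succ_le _ _ n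
    _ ≤ (κ * g)⁻¹ * √g * (κ * g)⁻¹ ^ n := by
        gcongr
        exact norm_sqrt_abs_mul_reducedResolvent_le hlam hlamh hT hg hgapWeight hδ
    _ = κ ^ (-((n + 1 : ℕ) : ℤ)) * g ^ (-((n + 1 : ℕ) : ℤ)) * √g := by
        rw [← mul_zpow, _root_.zpow_neg, zpow_natCast, ← inv_pow, pow_succ]
        ring

theorem stmt16 {d : ℕ} (lam : Fin d → ℝ) (u : Fin d → Fin d → ℝ)
    (hON : ∀ k l, u k ⬝ᵥ u l = if k = l then (1 : ℝ) else 0)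
    (hlam : Antitone lam)
    (E : Matrix (Fin d) (Fin d) ℝ) (hE : E.IsSymm)
    (j : Fin d) (gj : ℝ) (hgj_pos : 0 < gj)
    (hgj : IsLeast {x : ℝ | ∃ k, k ≠ j ∧ x = |lam k - lam j|} gj)
    (lamh : Fin d → ℝ) (uh : Fin d → Fin d → ℝ)
    (hONh : ∀ k l, uh k ⬝ᵥ uh l = if k = l then (1 : ℝ) else 0)
    (hlamh : Antitone lamh)
    (hdecomp : (∑ k, lam k • proj (u k)) + E = ∑ k, lamh k • proj (uh k))
    (hdelta : delta lam u j gj E < 1 / 2) :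
    ∀ k : ℕ, 1 ≤ k →
      opNorm (invSqrtAbsRes lam u j *
          (∑ l ∈ Finset.univ.filter (fun l => l ≠ j),
            (lamh l - lam j)⁻¹ • proj (uh l)) ^ k) ≤
        (1 - delta lam u j gj E) ^ (-(k : ℤ)) * gj ^ (-(k : ℤ)) * Real.sqrt gj := by
  obtain ⟨b, hb⟩ := exists_orthonormalBasis_eq_toLp hON
  obtain ⟨bh, hbh⟩ := exists_orthonormalBasis_eq_toLp hONh
  have hT : spectralOp b lam + toEuclideanCLM (𝕜 := ℝ) E = spectralOp bh lamh := by
    rw [← toEuclideanCLM_sum_smul_proj hb, ← map_add, hdecomp, toEuclideanCLM_sum_smul_proj hbh]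
  intro k hk
  rw [delta_eq_relNorm hb] at hdelta ⊢
  rw [opNorm, map_mul, map_pow, toEuclideanCLM_invSqrtAbsRes hb,
    toEuclideanCLM_sum_inv_smul_proj hbh]
  exact stmt16_general hlam hlamh hT hgj_pos (fun i hi => hgj.2 ⟨i, hi, rfl⟩) hdelta.le hk
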